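/- For odd n ≥ 3, Player 1 has a winning strategy for REL(Dic_n, {a,x}), where Dic_n = ⟨a,x | a^{2n} = x^4 = x^{-1}axa = e⟩. -/

import Mathlib

namespace RelatorGames

variable {G : Type*} [Group G]

/-- The letters available in the relator games: elements of `S` and their inverses. -/
def letters (S : Set G) : Set G := S ∪ (fun g => g⁻¹) '' S

/-- Evaluate a history of moves (most recent letter first) to a group element:
the group element represented by the word built so far. -/
def eval (h : List G) : G := h.reverse.prod

/-- A move `m` is legal after history `h`: it is a letter of `S ∪ S⁻¹` and it is not
the inverse of the immediately preceding letter (no backtracking). -/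
def LegalMove (S : Set G) (h : List G) (m : G) : Prop :=
  m ∈ letters S ∧ ∀ p ∈ h.head?, m ≠ p⁻¹

/-- Appending `m` to the history `h` produces a word equal in `G` to some earlier
prefix of the word (equivalently, the walk in the Cayley graph revisits a vertex). -/
def ClosesCycle (h : List G) (m : G) : Prop :=
  ∃ t, t <:+ h ∧ eval t = eval (m :: h)

/-- A strategy: a choice of next letter given the history (most recent letter first). -/
abbrev Strategy (G : Type*) := List G → G

/-- The sequence of histories arising when the first player (moving at even steps)
uses `σ` and the second player (moving at odd steps) uses `τ`. -/
def hist (σ τ : Strategy G) : ℕ → List G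
  | 0 => []
  | k + 1 =>
      (if k % 2 = 0 then σ (hist σ τ k) else τ (hist σ τ k)) :: hist σ τ k

/-- The move made at step `k` in the play of `σ` against `τ`. -/
def moveAt (σ τ : Strategy G) (k : ℕ) : G :=
  if k % 2 = 0 then σ (hist σ τ k) else τ (hist σ τ k)

/-- Step `j` is uneventful: the move made is legal and does not close a cycle. -/
def Ok (S : Set G) (σ τ : Strategy G) (j : ℕ) : Prop :=
  LegalMove S (hist σ τ j) (moveAt σ τ j) ∧ ¬ ClosesCycle (hist σ τ j) (moveAt σ τ j)

/-- In the play of `σ` against `τ`, the player moving at steps congruent to `p` mod 2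
wins the relator achievement game `REL(G,S)`: at the first eventful step, either it is
that player's turn and they legally close a cycle, or it is the opponent's turn and the
opponent has made an illegal move (in particular, has no legal move). -/
def RelWins (S : Set G) (p : ℕ) (σ τ : Strategy G) : Prop :=
  ∃ k : ℕ, (∀ j < k, Ok S σ τ j) ∧
    ((k % 2 = p ∧ LegalMove S (hist σ τ k) (moveAt σ τ k) ∧
        ClosesCycle (hist σ τ k) (moveAt σ τ k)) ∨
      (k % 2 ≠ p ∧ ¬ LegalMove S (hist σ τ k) (moveAt σ τ k)))

/-- In the play of `σ` against `τ`, the player moving at steps congruent to `p` mod 2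
wins the relator avoidance game `RAV(G,S)`: at the first eventful step it is the
opponent's turn, and the opponent either makes an illegal move (in particular, has no
legal move) or closes a cycle. -/
def RavWins (S : Set G) (p : ℕ) (σ τ : Strategy G) : Prop :=
  ∃ k : ℕ, (∀ j < k, Ok S σ τ j) ∧ k % 2 ≠ p ∧
    (¬ LegalMove S (hist σ τ k) (moveAt σ τ k) ∨ ClosesCycle (hist σ τ k) (moveAt σ τ k))

/-- Player 1 has a winning strategy for `REL(G,S)`. -/
def FirstWinsREL (S : Set G) : Prop :=
  ∃ σ : Strategy G, ∀ τ : Strategy G, RelWins S 0 σ τ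

/-- Player 2 has a winning strategy for `REL(G,S)`. -/
def SecondWinsREL (S : Set G) : Prop :=
  ∃ τ : Strategy G, ∀ σ : Strategy G, RelWins S 1 σ τ

/-- Player 1 has a winning strategy for `RAV(G,S)`. -/
def FirstWinsRAV (S : Set G) : Prop :=
  ∃ σ : Strategy G, ∀ τ : Strategy G, RavWins S 0 σ τ

/-- Player 2 has a winning strategy for `RAV(G,S)`. -/
def SecondWinsRAV (S : Set G) : Prop :=
  ∃ τ : Strategy G, ∀ σ : Strategy G, RavWins S 1 σ τ

end RelatorGames

/-!
No play on a finite group lasts forever, so the first player wins as soon as the second player can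
never close a cycle. The Cayley graph of `Dic_n` consists of `n` columns, each a 4-cycle
`y ↦ a ^ c * x ^ y`; neighbouring columns are joined height by height, and column `n - 1` is joined
to column `0` with a shift of two heights.

The first player walks to the right, so that the second player is always to move at a vertex
`a ^ c * x ^ y` with `c + y` odd. The walk stays at height `0` up to the first vertical move of the
second player, in an odd column `d`. When the walk later reaches the gluing, the parity of `c + y`
leaves four cases:
* the second player crosses the gluing, and the first player closes up vertically on the identity;
* the second player reaches height `2` of column `n - 1`, which is adjacent to the identity;
* the second player moves vertically in column `n - 1` to height `0`, and the first player crosses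
  to height `2` and shadows the opening row: a vertical move is continued back into that row, and
  otherwise the first player is the one to close up from column `d`;
* the second player enters column `n - 1` horizontally at height `0`, and the first player steps up,
  after which every reply lets them close a cycle.
-/

namespace RelatorGames

/-! ### Plays as walks in the Cayley graph -/

section Play

variable {G : Type*}

theorem hist_suffix_of_le (σ τ : Strategy G) {i j : ℕ} (hij : i ≤ j) :
    hist σ τ i <:+ hist σ τ j := by
  induction j, hij using Nat.le_induction with
  | base => exact List.suffix_rfl
  | succ j _ ih => exact ih.trans (List.suffix_cons _ _)

variable [Group G] {S : Set G}

theorem exists_not_ok [Finite G] (σ τ : Strategy G) : ∃ j, ¬ Ok S σ τ j := by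
  by_contra! hok
  refine not_injective_infinite_finite (fun k => eval (hist σ τ k))
    (.of_lt_imp_ne fun i j hij heq => ?_)
  obtain ⟨j, rfl⟩ := Nat.exists_eq_succ_of_ne_zero (Nat.ne_zero_of_lt hij)
  exact (hok j).2 ⟨_, hist_suffix_of_le σ τ (Nat.le_of_lt_succ hij), heq⟩

/-- No play on a finite group lasts forever, so the first player wins by merely keeping the second
player from ever closing a cycle. -/
theorem firstWinsREL_of_history_invariant [Finite G] {K : List G → Prop} (init : K [])
    (step : ∀ h, K h → ∃ m, LegalMove S h m ∧ (ClosesCycle h m ∨ ∀ m', LegalMove S (m :: h) m' →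
      ¬ ClosesCycle (m :: h) m' ∧ K (m' :: m :: h))) :
    FirstWinsREL S := by
  choose! σ legal next using step
  refine ⟨σ, fun τ => ?_⟩
  by_contra hlose
  have uneventful (t : ℕ) : (∀ j < 2 * t, Ok S σ τ j) ∧ K (hist σ τ (2 * t)) := by
    induction t with
    | zero => exact ⟨by simp, init⟩
    | succ t ih =>
      obtain ⟨hok, hK⟩ := ih
      have move_eq : moveAt σ τ (2 * t) = σ (hist σ τ (2 * t)) := by simp [moveAt]
      have hlegal := legal _ hK
      have hnext := next _ hK
      rw [← move_eq] at hlegal hnext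
      have hopen : ¬ ClosesCycle (hist σ τ (2 * t)) (moveAt σ τ (2 * t)) := fun hclose =>
        hlose ⟨2 * t, hok, Or.inl ⟨by omega, hlegal, hclose⟩⟩
      have hok' := Nat.forall_lt_succ_right.2 ⟨hok, hlegal, hopen⟩
      have hanswer : LegalMove S (hist σ τ (2 * t + 1)) (moveAt σ τ (2 * t + 1)) := by
        by_contra hillegal
        exact hlose ⟨2 * t + 1, hok', Or.inr ⟨by omega, hillegal⟩⟩
      obtain ⟨hsafe, hK'⟩ := hnext.resolve_left hopen _ hanswer
      exact ⟨Nat.forall_lt_succ_right.2 ⟨hok', hanswer, hsafe⟩, hK'⟩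
  obtain ⟨j, hj⟩ := exists_not_ok (S := S) σ τ
  exact hj ((uneventful (j + 1)).1 j (by omega))

end Play

section Walk

variable {G : Type*} [Group G] {S : Set G}

/-- The vertices of the Cayley graph on the walk traced by the word with history `h`. -/
def visited (h : List G) : Set G :=
  {g | ∃ t, t <:+ h ∧ eval t = g}

theorem eval_nil : eval ([] : List G) = 1 := rfl

theorem eval_singleton (m : G) : eval [m] = m := by
  simp [eval]

theorem eval_cons (m : G) (h : List G) : eval (m :: h) = eval h * m := by
  simp [eval]

theorem visited_nil : visited ([] : List G) = {1} := by
  ext g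
  simp [visited, eval_nil, eq_comm]

theorem visited_cons (m : G) (h : List G) :
    visited (m :: h) = insert (eval (m :: h)) (visited h) := by
  ext g
  simp [visited, List.suffix_cons_iff, or_and_right, exists_or, eq_comm]

theorem mem_letters_iff {m : G} : m ∈ letters S ↔ m ∈ S ∨ m⁻¹ ∈ S := by
  simp [letters]

theorem mulCayley_adj_iff_mem_letters (hS : 1 ∉ S) {g w : G} :
    (SimpleGraph.mulCayley S).Adj g w ↔ g⁻¹ * w ∈ letters S := by
  have ne_of_mem : g⁻¹ * w ∈ S ∨ w⁻¹ * g ∈ S → g ≠ w := by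
    rintro h rfl
    simp [hS] at h
  simpa [SimpleGraph.mulCayley_adj, mem_letters_iff] using ne_of_mem

theorem legalMove_nil_iff (hS : 1 ∉ S) {m : G} :
    LegalMove S [] m ↔ (SimpleGraph.mulCayley S).Adj 1 m := by
  simp [LegalMove, mulCayley_adj_iff_mem_letters hS]

/-- Not backtracking means not returning to the vertex visited two moves ago. -/
theorem legalMove_cons_iff (hS : 1 ∉ S) {h : List G} {p m : G} :
    LegalMove S (p :: h) m ↔
      (SimpleGraph.mulCayley S).Adj (eval (p :: h)) (eval (m :: p :: h)) ∧
        eval (m :: p :: h) ≠ eval h := by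
  simp [LegalMove, mulCayley_adj_iff_mem_letters hS, eval_cons, mul_assoc, mul_eq_one_iff_eq_inv']

/-- With `V` visited and the walk at `g`, the second player's move to `w` closes no cycle, and the
first player can answer it by closing one or by restoring `I`. Here `I V p g` speaks of the visited
set `V`, the previous vertex `p` and the current vertex `g` when the second player is to move. -/
def Answerable (S : Set G) (I : Set G → G → G → Prop) (V : Set G) (g w : G) : Prop :=
  w ∉ V ∧ ∃ w', (SimpleGraph.mulCayley S).Adj w w' ∧ w' ≠ g ∧
    (w' ∈ V ∨ I (insert w' (insert w V)) w w')

theorem firstWinsREL_of_answerable [Finite G] (hS : 1 ∉ S) {I : Set G → G → G → Prop} {g₁ : G}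
    (adj : (SimpleGraph.mulCayley S).Adj 1 g₁) (init : I {g₁, 1} 1 g₁)
    (step : ∀ V p g, I V p g → ∀ w, (SimpleGraph.mulCayley S).Adj g w → w ≠ p →
      Answerable S I V g w) :
    FirstWinsREL S := by
  apply firstWinsREL_of_history_invariant (K := fun h => ∃ m, LegalMove S h m ∧
    (ClosesCycle h m ∨ I (visited (m :: h)) (eval h) (eval (m :: h))))
  · refine ⟨g₁, (legalMove_nil_iff hS).2 adj, Or.inr ?_⟩
    rwa [visited_cons, visited_nil, eval_singleton]
  · rintro h ⟨m, hm, hclose | hI⟩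
    · exact ⟨m, hm, Or.inl hclose⟩
    refine ⟨m, hm, Or.inr fun m' hm' => ?_⟩
    obtain ⟨hadj, hne⟩ := (legalMove_cons_iff hS).1 hm'
    obtain ⟨hfresh, w, hw, hwne, hwI⟩ := step _ _ _ hI _ hadj hne
    refine ⟨hfresh, (eval (m' :: m :: h))⁻¹ * w, ?_⟩
    have eval_w : eval ((eval (m' :: m :: h))⁻¹ * w :: m' :: m :: h) = w := by
      rw [eval_cons, mul_inv_cancel_left]
    rw [legalMove_cons_iff hS, visited_cons, visited_cons m', eval_w]
    refine ⟨⟨hw, hwne⟩, hwI.imp_left fun hV => ?_⟩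
    change eval _ ∈ visited _
    rw [eval_w, visited_cons]
    exact Set.mem_insert_of_mem _ hV

end Walk

/-! ### The Cayley graph of the dicyclic group -/

section Dicyclic

open QuaternionGroup SimpleGraph

variable {n : ℕ}

/-- The generators `a` and `x` of the dicyclic group. -/
abbrev generators (n : ℕ) : Set (QuaternionGroup n) := {a 1, xa 0}

/-- The vertex `a ^ c * x ^ y` of the Cayley graph, in column `c` and at height `y`. Integer
coordinates are redundant: `(c, y)`, `(c, y + 4)` and `(c + n, y - 2)` name the same vertex. -/
def vertex (n : ℕ) (c y : ℤ) : QuaternionGroup n := a c * xa 0 ^ y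

theorem one_notMem_generators : 1 ∉ generators n := by
  have : Nontrivial (ZMod (2 * n)) := ZMod.nontrivial_iff.2 (by omega)
  simp [generators, one_def, -a_zero]

theorem vertex_zero_zero : vertex n 0 0 = 1 := by
  simp [vertex]

theorem vertex_add (c y s : ℤ) : vertex n c (y + s) = vertex n c y * xa 0 ^ s := by
  rw [vertex, vertex, zpow_add, mul_assoc]

theorem a_zpow (i : ZMod (2 * n)) (k : ℤ) : a i ^ k = a ((k : ZMod (2 * n)) * i) := by
  have inv_a : (a i : QuaternionGroup n)⁻¹ = a (-i) := rfl
  induction k with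
  | zero => simp
  | succ k ih => rw [zpow_add_one, ih, a_mul_a, Int.cast_add, Int.cast_one, add_one_mul]
  | pred k ih =>
    rw [zpow_sub_one, ih, inv_a, a_mul_a, Int.cast_sub, Int.cast_one, sub_one_mul, sub_eq_add_neg]

theorem xa_zpow_two (i : ZMod (2 * n)) : xa i ^ (2 : ℤ) = a n := by
  rw [zpow_ofNat, xa_sq]

theorem vertex_add_two (c y : ℤ) : vertex n c (y + 2) = vertex n (c + n) y := by
  rw [vertex, vertex, add_comm y, zpow_add, xa_zpow_two, ← mul_assoc, a_mul_a, Int.cast_add,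
    Int.cast_natCast]

theorem vertex_last_add_one (y : ℤ) : vertex n (n - 1 + 1) y = vertex n 0 (y + 2) := by
  rw [vertex_add_two, sub_add_cancel, zero_add]

theorem vertex_two_mul (c k : ℤ) : vertex n c (2 * k) = a ((c + k * n : ℤ) : ZMod (2 * n)) := by
  rw [vertex, zpow_mul, xa_zpow_two, a_zpow, a_mul_a]
  push_cast
  rfl

theorem vertex_two_mul_add_one (c k : ℤ) :
    vertex n c (2 * k + 1) = xa (-((c + k * n : ℤ) : ZMod (2 * n))) := by
  rw [vertex_add, vertex_two_mul, zpow_one, a_mul_xa, zero_sub]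

theorem vertex_mul_a_of_even {y : ℤ} (hy : Even y) (c j : ℤ) :
    vertex n c y * a j = vertex n (c + j) y := by
  obtain ⟨k, rfl⟩ := hy.two_dvd
  rw [vertex_two_mul, vertex_two_mul, a_mul_a]
  push_cast
  ring_nf

theorem vertex_mul_a_of_odd {y : ℤ} (hy : Odd y) (c j : ℤ) :
    vertex n c y * a j = vertex n (c - j) y := by
  obtain ⟨k, rfl⟩ := hy
  rw [vertex_two_mul_add_one, vertex_two_mul_add_one, xa_mul_a]
  push_cast
  ring_nf

theorem mem_letters_generators_iff {m : QuaternionGroup n} :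
    m ∈ letters (generators n) ↔
      m = a (1 : ℤ) ∨ m = a (-1 : ℤ) ∨ m = xa 0 ^ (1 : ℤ) ∨ m = xa 0 ^ (-1 : ℤ) := by
  have inv_a : (a 1 : QuaternionGroup n)⁻¹ = a (-1) := rfl
  simp only [mem_letters_iff, generators, Set.mem_insert_iff, Set.mem_singleton_iff,
    inv_eq_iff_eq_inv, inv_a, Int.cast_one, Int.cast_neg, zpow_one, zpow_neg]
  tauto

theorem mulCayley_adj_vertex_iff {c y : ℤ} {w : QuaternionGroup n} :
    (mulCayley (generators n)).Adj (vertex n c y) w ↔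
      w = vertex n (c + 1) y ∨ w = vertex n (c - 1) y ∨
        w = vertex n c (y + 1) ∨ w = vertex n c (y - 1) := by
  rw [mulCayley_adj_iff_mem_letters one_notMem_generators, mem_letters_generators_iff]
  simp only [inv_mul_eq_iff_eq_mul, ← vertex_add]
  rcases Int.even_or_odd y with hy | hy
  · simp only [vertex_mul_a_of_even hy, ← sub_eq_add_neg]
  · simp only [vertex_mul_a_of_odd hy, sub_neg_eq_add, ← sub_eq_add_neg]
    tauto

theorem two_mul_dvd_add_mul_sub_add_mul_iff {m c c' k k' : ℤ} (h : c - c' < m)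
    (h' : c' - c < m) : 2 * m ∣ (c' + k' * m) - (c + k * m) ↔ c = c' ∧ 2 ∣ k - k' := by
  constructor
  · rintro ⟨q, hq⟩
    have hdvd : m ∣ c' - c := ⟨2 * q - k' + k, by linarith⟩
    have hc : c' - c = 0 := Int.eq_zero_of_abs_lt_dvd hdvd (by rw [abs_lt]; omega)
    obtain rfl : c = c' := by omega
    refine ⟨rfl, -q, mul_right_cancel₀ (show m ≠ 0 by omega) ?_⟩
    linarith
  · rintro ⟨rfl, q, hq⟩
    exact ⟨-q, by linear_combination -m * hq⟩

theorem vertex_eq_vertex_iff {c y c' y' : ℤ} (h : c - c' < n) (h' : c' - c < n) :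
    vertex n c y = vertex n c' y' ↔ c = c' ∧ 4 ∣ y - y' := by
  have intCast_eq_iff {k k' : ℤ} : ((c + k * n : ℤ) : ZMod (2 * n)) = (c' + k' * n : ℤ) ↔
      c = c' ∧ 2 ∣ k - k' := by
    rw [ZMod.intCast_eq_intCast_iff_dvd_sub, Nat.cast_mul, Nat.cast_ofNat,
      two_mul_dvd_add_mul_sub_add_mul_iff h h']
  obtain ⟨k, rfl | rfl⟩ := Int.even_or_odd' y <;> obtain ⟨k', rfl | rfl⟩ := Int.even_or_odd' y' <;>
    simp only [vertex_two_mul, vertex_two_mul_add_one, a.injEq, xa.injEq, neg_inj, reduceCtorEq,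
      intCast_eq_iff, false_iff] <;>
    omega

theorem vertex_eq_of_dvd_sub (c : ℤ) {y y' : ℤ} (h : 4 ∣ y - y') :
    vertex n c y = vertex n c y' := by
  obtain ⟨k, hk⟩ := h
  rw [← add_sub_cancel y' y, hk, vertex_add, zpow_mul, zpow_ofNat, xa_pow_four, one_zpow, mul_one]

theorem vertex_ne_vertex {c y c' y' : ℤ} (h : c - c' < n) (h' : c' - c < n)
    (hne : c = c' → ¬ 4 ∣ y - y') : vertex n c y ≠ vertex n c' y' := fun heq =>
  have ⟨hc, hy⟩ := (vertex_eq_vertex_iff h h').1 heq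
  hne hc hy

theorem mem_insert_vertex_iff {c y c' y' : ℤ} (h : c - c' < n) (h' : c' - c < n)
    {V : Set (QuaternionGroup n)} :
    vertex n c y ∈ insert (vertex n c' y') V ↔ (c = c' ∧ 4 ∣ y - y') ∨ vertex n c y ∈ V := by
  rw [Set.mem_insert_iff, vertex_eq_vertex_iff h h']

theorem vertex_adj_right (c y : ℤ) :
    (mulCayley (generators n)).Adj (vertex n c y) (vertex n (c + 1) y) :=
  mulCayley_adj_vertex_iff.2 (Or.inl rfl)

theorem vertex_adj_vertical (c y : ℤ) {s : ℤ} (hs : s = 1 ∨ s = -1) :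
    (mulCayley (generators n)).Adj (vertex n c y) (vertex n c (y + s)) := by
  rcases hs with rfl | rfl <;> simp [mulCayley_adj_vertex_iff, sub_eq_add_neg]

/-! ### The positions of the strategy -/

variable {V : Set (QuaternionGroup n)} {c y d e j : ℤ}

/-- Every visited vertex, written in the fundamental domain `0 ≤ i < n`, lies in a column up to
`c`. -/
def ColumnsLE (V : Set (QuaternionGroup n)) (c : ℤ) : Prop :=
  ∀ i z : ℤ, 0 ≤ i → i < n → vertex n i z ∈ V → i ≤ c

/-- Column `c` is the rightmost one visited, and only at height `y`. -/
structure Frontier (V : Set (QuaternionGroup n)) (c y : ℤ) : Prop where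
  mem : vertex n c y ∈ V
  columnsLE : ColumnsLE V c
  dvd : ∀ z, vertex n c z ∈ V → 4 ∣ z - y

/-- The visited vertices are exactly those of height `0` in the columns `0, …, c`. -/
def StraightRow (V : Set (QuaternionGroup n)) (c : ℤ) : Prop :=
  ∀ i z : ℤ, 0 ≤ i → i < n → (vertex n i z ∈ V ↔ i ≤ c ∧ 4 ∣ z)

/-- The walk started along height `0` up to column `d`, where the second player turned
vertically by `e`; the columns before `d` have otherwise been visited only at height `2`, up to
column `j` (so not at all if `j = -1`). -/
structure OpeningTurn (V : Set (QuaternionGroup n)) (d e j : ℤ) : Prop where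
  pos : 0 < d
  odd : d % 2 = 1
  unit : e = 1 ∨ e = -1
  row : ∀ i : ℤ, 0 ≤ i → i ≤ d → vertex n i 0 ∈ V
  turn : vertex n d e ∈ V
  before : ∀ i z : ℤ, 0 ≤ i → i < d → vertex n i z ∈ V → 4 ∣ z ∨ 4 ∣ z - 2 ∧ i ≤ j
  column : ∀ z, vertex n d z ∈ V → 4 ∣ z ∨ 4 ∣ z - e

/-- What has been visited, near the gluing of column `n - 1` to column `0`, once the first player
has moved up from `vertex n (n - 1) 0` to `vertex n (n - 1) 1`. -/
structure Corner (V : Set (QuaternionGroup n)) : Prop where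
  first_mem : vertex n 0 0 ∈ V
  penultimate_mem : vertex n (n - 2) 0 ∈ V
  first : ∀ z, vertex n 0 z ∈ V → 4 ∣ z
  penultimate : ∀ z, vertex n (n - 2) z ∈ V → 4 ∣ z
  last : ∀ z, vertex n (n - 1) z ∈ V → 4 ∣ z ∨ 4 ∣ z - 1

/-- The positions, with the second player to move, that the first player steers through:
`Steered n V p g` says that `V` has been visited and that the last move led from `p` to `g`. -/
inductive Steered (n : ℕ) : Set (QuaternionGroup n) → QuaternionGroup n → QuaternionGroup n → Prop
  | straight {V : Set (QuaternionGroup n)} {c : ℤ} (pos : 0 < c) (lt : c < n - 1)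
      (odd : c % 2 = 1) (row : StraightRow V c) :
      Steered n V (vertex n (c - 1) 0) (vertex n c 0)
  | advancing {V : Set (QuaternionGroup n)} {d e c y : ℤ} (turned : d < c) (lt : c < n)
      (parity : (c + y) % 2 = 1) (opening : OpeningTurn V d e (-1)) (frontier : Frontier V c y) :
      Steered n V (vertex n (c - 1) y) (vertex n c y)
  | returning {V : Set (QuaternionGroup n)} {d e j : ℤ} (nonneg : 0 ≤ j) (lt : j < d)
      (turn_lt : d < n) (even : j % 2 = 0) (opening : OpeningTurn V d e j) :
      Steered n V (vertex n (j - 1) 2) (vertex n j 2)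
  | corner {V : Set (QuaternionGroup n)} (corner : Corner V) :
      Steered n V (vertex n (n - 1) 0) (vertex n (n - 1) 1)

theorem ColumnsLE.notMem (h : ColumnsLE V c) {i : ℤ} (hi : 0 ≤ i) (hin : i < n) (hci : c < i)
    (z : ℤ) : vertex n i z ∉ V :=
  fun hmem => hci.not_ge (h i z hi hin hmem)

theorem ColumnsLE.insert (h : ColumnsLE V c) (hc : 0 ≤ c) (hcn : c < n) (z : ℤ) :
    ColumnsLE (insert (vertex n c z) V) c := by
  intro i z' hi hin hmem
  rcases (mem_insert_vertex_iff (by omega) (by omega)).1 hmem with ⟨rfl, -⟩ | hmem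
  · exact le_rfl
  · exact h i z' hi hin hmem

theorem ColumnsLE.frontier_insert (h : ColumnsLE V c) (hc : 0 ≤ c) (hcn : c + 1 < n) (y : ℤ) :
    Frontier (Insert.insert (vertex n (c + 1) y) V) (c + 1) y where
  mem := Set.mem_insert _ _
  columnsLE i z hi hin hmem := by
    rcases (mem_insert_vertex_iff (by omega) (by omega)).1 hmem with ⟨rfl, -⟩ | hmem
    · exact le_rfl
    · have := h i z hi hin hmem
      omega
  dvd z hmem :=
    ((mem_insert_vertex_iff (by omega) (by omega)).1 hmem).elim And.right
      fun hmem => absurd hmem (h.notMem (by omega) hcn (by omega) z)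

theorem Frontier.notMem (h : Frontier V c y) {z : ℤ} (hz : ¬ 4 ∣ z - y) : vertex n c z ∉ V :=
  fun hmem => hz (h.dvd z hmem)

namespace StraightRow

theorem columnsLE (h : StraightRow V c) : ColumnsLE V c :=
  fun i z hi hin hmem => ((h i z hi hin).1 hmem).1

theorem frontier (h : StraightRow V c) (hc : 0 ≤ c) (hcn : c < n) : Frontier V c 0 where
  mem := (h c 0 hc hcn).2 ⟨le_rfl, dvd_zero 4⟩
  columnsLE := h.columnsLE
  dvd z hmem := by simpa using ((h c z hc hcn).1 hmem).2

theorem insert (h : StraightRow V c) (hc : 0 ≤ c) (hcn : c + 1 < n) :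
    StraightRow (Insert.insert (vertex n (c + 1) 0) V) (c + 1) := by
  intro i z hi hin
  rw [mem_insert_vertex_iff (by omega) (by omega), h i z hi hin]
  omega

theorem one : StraightRow ({1} : Set (QuaternionGroup n)) 0 := by
  intro i z hi hin
  rw [← vertex_zero_zero, Set.mem_singleton_iff, vertex_eq_vertex_iff (by omega) (by omega)]
  omega

theorem openingTurn (h : StraightRow V c) (hc : 0 < c) (hcn : c < n)
    (odd : c % 2 = 1) {s : ℤ} (hs : s = 1 ∨ s = -1) :
    OpeningTurn (Insert.insert (vertex n c s) V) c s (-1) where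
  pos := hc
  odd := odd
  unit := hs
  row i hi hic := Set.mem_insert_of_mem _ ((h i 0 hi (by omega)).2 ⟨hic, dvd_zero 4⟩)
  turn := Set.mem_insert _ _
  before i z hi hic hmem := by
    rw [mem_insert_vertex_iff (by omega) (by omega), h i z hi (by omega)] at hmem
    omega
  column z hmem := by
    rw [mem_insert_vertex_iff (by omega) (by omega), h c z hc.le hcn] at hmem
    omega

end StraightRow

namespace OpeningTurn

theorem origin_mem (h : OpeningTurn V d e j) : vertex n 0 0 ∈ V :=
  h.row 0 le_rfl h.pos.le

theorem dvd_of_first_column (h : OpeningTurn V d e (-1)) (z : ℤ) (hmem : vertex n 0 z ∈ V) :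
    4 ∣ z :=
  (h.before 0 z le_rfl h.pos hmem).resolve_right fun h => absurd h.2 (by decide)

theorem insert_of_lt (h : OpeningTurn V d e j) (hdc : d < c) (hcn : c < n) (y : ℤ) :
    OpeningTurn (Insert.insert (vertex n c y) V) d e j where
  pos := h.pos
  odd := h.odd
  unit := h.unit
  row i hi hid := Set.mem_insert_of_mem _ (h.row i hi hid)
  turn := Set.mem_insert_of_mem _ h.turn
  before i z hi hid hmem :=
    h.before i z hi hid (((mem_insert_vertex_iff (by omega) (by omega)).1 hmem).resolve_left
      (by omega))
  column z hmem :=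
    have := h.pos
    h.column z (((mem_insert_vertex_iff (by omega) (by omega)).1 hmem).resolve_left (by omega))

theorem insert_return (h : OpeningTurn V d e j) (hdn : d < n) (hj : 0 ≤ j + 1)
    (hjd : j + 1 < d) : OpeningTurn (Insert.insert (vertex n (j + 1) 2) V) d e (j + 1) where
  pos := h.pos
  odd := h.odd
  unit := h.unit
  row i hi hid := Set.mem_insert_of_mem _ (h.row i hi hid)
  turn := Set.mem_insert_of_mem _ h.turn
  before i z hi hid hmem := by
    rcases (mem_insert_vertex_iff (by omega) (by omega)).1 hmem with ⟨hij, hz⟩ | hmem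
    · exact Or.inr ⟨hz, hij.le⟩
    · have := h.before i z hi hid hmem
      omega
  column z hmem :=
    h.column z (((mem_insert_vertex_iff (by omega) (by omega)).1 hmem).resolve_left (by omega))

end OpeningTurn

theorem Frontier.corner (hn : 1 < n) (h : Frontier V (n - 2) y) (hy : 4 ∣ y)
    (origin_mem : vertex n 0 0 ∈ V) (first : ∀ z, vertex n 0 z ∈ V → 4 ∣ z) :
    Corner (insert (vertex n (n - 1) 1) (insert (vertex n (n - 1) 0) V)) where
  first_mem := by simp [origin_mem]
  penultimate_mem := by
    rw [vertex_eq_of_dvd_sub (n - 2) (y := 0) (y' := y) (by omega)]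
    simp [h.mem]
  first z hmem := by
    simp only [mem_insert_vertex_iff (n := n) (c := 0) (c' := n - 1) (by omega) (by omega)]
      at hmem
    have := first z
    grind
  penultimate z hmem := by
    simp only [mem_insert_vertex_iff (n := n) (c := n - 2) (c' := n - 1) (by omega) (by omega)]
      at hmem
    have := h.dvd z
    grind
  last z hmem := by
    simp only [mem_insert_vertex_iff (n := n) (c := n - 1) (c' := n - 1) (by omega) (by omega)]
      at hmem
    have := h.columnsLE (n - 1) z
    grind

/-! ### The answers of the strategy -/

variable {I : Set (QuaternionGroup n) → QuaternionGroup n → QuaternionGroup n → Prop}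

theorem answerable_of_adj_left
    (right : Answerable (generators n) I V (vertex n c y) (vertex n (c + 1) y))
    (vertical : ∀ s, s = 1 ∨ s = -1 →
      Answerable (generators n) I V (vertex n c y) (vertex n c (y + s)))
    {w : QuaternionGroup n} (hw : (mulCayley (generators n)).Adj (vertex n c y) w)
    (hne : w ≠ vertex n (c - 1) y) :
    Answerable (generators n) I V (vertex n c y) w := by
  rcases mulCayley_adj_vertex_iff.1 hw with rfl | rfl | rfl | rfl
  · exact right
  · exact absurd rfl hne
  · exact vertical 1 (Or.inl rfl)
  · exact vertical (-1) (Or.inr rfl)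

theorem answerable_last_column (origin_mem : vertex n 0 0 ∈ V) (hy : 4 ∣ y + 2)
    {g : QuaternionGroup n} (fresh : vertex n (n - 1) y ∉ V) (hne : vertex n 0 0 ≠ g) :
    Answerable (generators n) I V g (vertex n (n - 1) y) := by
  refine ⟨fresh, vertex n 0 0, ?_, hne, Or.inl origin_mem⟩
  rw [vertex_eq_of_dvd_sub 0 (show 4 ∣ 0 - (y + 2) by omega), ← vertex_last_add_one]
  exact vertex_adj_right _ _

theorem Corner.answerable (hn : 1 < n) (h : Corner V) {w : QuaternionGroup n}
    (hw : (mulCayley (generators n)).Adj (vertex n (n - 1) 1) w) (hne : w ≠ vertex n (n - 1) 0) :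
    Answerable (generators n) I V (vertex n (n - 1) 1) w := by
  rcases mulCayley_adj_vertex_iff.1 hw with rfl | rfl | rfl | rfl
  · rw [vertex_last_add_one]
    refine ⟨mt (h.first _) (by decide), vertex n 0 4, vertex_adj_vertical 0 (1 + 2) (Or.inl rfl),
      vertex_ne_vertex (by omega) (by omega) (by omega), Or.inl ?_⟩
    rw [vertex_eq_of_dvd_sub 0 (show 4 ∣ 4 - 0 by decide)]
    exact h.first_mem
  · rw [sub_sub, one_add_one_eq_two]
    exact ⟨mt (h.penultimate 1) (by decide), vertex n (n - 2) 0,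
      vertex_adj_vertical _ 1 (Or.inr rfl),
      vertex_ne_vertex (by omega) (by omega) (by omega), Or.inl h.penultimate_mem⟩
  · exact answerable_last_column h.first_mem (by decide) (mt (h.last _) (by decide))
      (vertex_ne_vertex (by omega) (by omega) (by omega))
  · exact absurd rfl hne

theorem Frontier.answerable_corner (hn : 1 < n) (h : Frontier V (n - 2) y) (hy : 4 ∣ y)
    (origin_mem : vertex n 0 0 ∈ V) (first : ∀ z, vertex n 0 z ∈ V → 4 ∣ z) :
    Answerable (generators n) (Steered n) V (vertex n (n - 2) y) (vertex n (n - 1) y) := by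
  rw [vertex_eq_of_dvd_sub (n - 1) (show 4 ∣ y - 0 by omega)]
  exact ⟨h.columnsLE.notMem (by omega) (by omega) (by omega) 0, vertex n (n - 1) 1,
    vertex_adj_vertical _ 0 (Or.inl rfl),
    vertex_ne_vertex (by omega) (by omega) (by omega),
    Or.inr (.corner (h.corner hn hy origin_mem first))⟩

section Straight

variable (h : StraightRow V c) (hc : 0 < c) (hcn : c < n - 1) (odd : c % 2 = 1)
include h hc hcn odd

theorem StraightRow.answerable_right (n_odd : Odd n) :
    Answerable (generators n) (Steered n) V (vertex n c 0) (vertex n (c + 1) 0) := by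
  rw [Nat.odd_iff] at n_odd
  by_cases hlast : c = n - 2
  · subst hlast
    rw [show (n : ℤ) - 2 + 1 = n - 1 by ring]
    exact (h.frontier hc.le (by omega)).answerable_corner (by omega) (dvd_zero 4)
      ((h 0 0 le_rfl (by omega)).2 ⟨hc.le, dvd_zero 4⟩)
      fun z hmem => ((h 0 z le_rfl (by omega)).1 hmem).2
  refine ⟨h.columnsLE.notMem (by omega) (by omega) (by omega) 0, _, vertex_adj_right _ _,
    vertex_ne_vertex (by omega) (by omega) (by omega), Or.inr ?_⟩
  have row := (h.insert hc.le (by omega)).insert (by omega) (by omega)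
  simpa only [add_sub_cancel_right] using
    Steered.straight (by omega) (by omega) (by omega) row

theorem StraightRow.answerable_vertical {s : ℤ} (hs : s = 1 ∨ s = -1) :
    Answerable (generators n) (Steered n) V (vertex n c 0) (vertex n c (0 + s)) := by
  rw [zero_add]
  refine ⟨(h.frontier hc.le (by omega)).notMem (by omega), _, vertex_adj_right _ _,
    vertex_ne_vertex (by omega) (by omega) (by omega), Or.inr ?_⟩
  have opening := (h.openingTurn hc (by omega) odd hs).insert_of_lt (lt_add_one c) (by omega) s
  have frontier := (h.columnsLE.insert hc.le (by omega) s).frontier_insert hc.le (by omega) s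
  simpa only [add_sub_cancel_right] using
    Steered.advancing (lt_add_one c) (by omega) (by omega) opening frontier

end Straight

theorem OpeningTurn.answerable_last_column_zero (h : OpeningTurn V d e (-1))
    (hd : d < n - 1) (fresh : vertex n (n - 1) 0 ∉ V) :
    Answerable (generators n) (Steered n) V (vertex n (n - 1) y) (vertex n (n - 1) 0) := by
  have := h.pos
  have retraced : vertex n (0 - 1) 2 = vertex n (n - 1) 0 := by
    rw [← zero_add 2, vertex_add_two, zero_sub, neg_add_eq_sub]
  refine ⟨fresh, vertex n 0 2, ?_, vertex_ne_vertex (by omega) (by omega) (by omega), Or.inr ?_⟩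
  · simpa only [vertex_last_add_one, zero_add] using vertex_adj_right (n := n) (n - 1) 0
  · have opening := (h.insert_of_lt hd (by omega) 0).insert_return (by omega) le_rfl (by omega)
    rw [neg_add_cancel] at opening
    simpa only [retraced] using
      Steered.returning le_rfl (by omega) (by omega) (by omega) opening

section Advancing

variable (hdc : d < c) (hcn : c < n) (parity : (c + y) % 2 = 1)
  (opening : OpeningTurn V d e (-1)) (frontier : Frontier V c y)
include hdc parity opening frontier

theorem OpeningTurn.answerable_right_of_lt (hcn : c + 2 < n) :
    Answerable (generators n) (Steered n) V (vertex n c y) (vertex n (c + 1) y) := by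
  have := opening.pos
  refine ⟨frontier.columnsLE.notMem (by omega) (by omega) (by omega) y, _, vertex_adj_right _ _,
    vertex_ne_vertex (by omega) (by omega) (by omega), Or.inr ?_⟩
  have opening := (opening.insert_of_lt (show d < c + 1 by omega) (by omega)
    y).insert_of_lt (show d < c + 1 + 1 by omega) (by omega) y
  have frontier := (frontier.columnsLE.frontier_insert (by omega) (by omega)
    y).columnsLE.frontier_insert (by omega) (by omega) y
  simpa only [add_sub_cancel_right] using
    Steered.advancing (by omega) (by omega) (by omega) opening frontier

include hcn

theorem OpeningTurn.answerable_right (n_odd : Odd n) :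
    Answerable (generators n) (Steered n) V (vertex n c y) (vertex n (c + 1) y) := by
  rw [Nat.odd_iff] at n_odd
  have := opening.pos
  obtain hlt | rfl | rfl : c + 2 < n ∨ c = n - 2 ∨ c = n - 1 := by omega
  · exact answerable_right_of_lt hdc parity opening frontier hlt
  · rw [show (n : ℤ) - 2 + 1 = n - 1 by ring]
    by_cases hy : 4 ∣ y
    · exact frontier.answerable_corner (by omega) hy opening.origin_mem opening.dvd_of_first_column
    · exact answerable_last_column opening.origin_mem (by omega)
        (frontier.columnsLE.notMem (by omega) (by omega) (by omega) y)
        (vertex_ne_vertex (by omega) (by omega) (by omega))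
  · rw [vertex_last_add_one]
    obtain ⟨s, hs, hclose⟩ : ∃ s : ℤ, (s = 1 ∨ s = -1) ∧ 4 ∣ y + 2 + s - 0 := by
      by_cases 4 ∣ y + 3
      exacts [⟨1, by omega, by omega⟩, ⟨-1, by omega, by omega⟩]
    refine ⟨mt (opening.dvd_of_first_column _) (by omega), _, vertex_adj_vertical 0 (y + 2) hs,
      vertex_ne_vertex (by omega) (by omega) (by omega), Or.inl ?_⟩
    rw [vertex_eq_of_dvd_sub 0 hclose]
    exact opening.origin_mem

theorem OpeningTurn.answerable_vertical (n_odd : Odd n) {s : ℤ} (hs : s = 1 ∨ s = -1) :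
    Answerable (generators n) (Steered n) V (vertex n c y) (vertex n c (y + s)) := by
  rw [Nat.odd_iff] at n_odd
  have := opening.pos
  have fresh : vertex n c (y + s) ∉ V := frontier.notMem (by omega)
  obtain hlt | rfl : c < n - 1 ∨ c = n - 1 := by omega
  · refine ⟨fresh, _, vertex_adj_right _ _, vertex_ne_vertex (by omega) (by omega) (by omega),
      Or.inr ?_⟩
    have opening := (opening.insert_of_lt hdc (by omega) (y + s)).insert_of_lt
      (show d < c + 1 by omega) (by omega) (y + s)
    have frontier := (frontier.columnsLE.insert (by omega) (by omega)
      (y + s)).frontier_insert (by omega) (by omega) (y + s)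
    simpa only [add_sub_cancel_right] using
      Steered.advancing (by omega) (by omega) (by omega) opening frontier
  by_cases hclose : 4 ∣ y + s + 2
  · exact answerable_last_column opening.origin_mem hclose fresh
      (vertex_ne_vertex (by omega) (by omega) (by omega))
  rw [vertex_eq_of_dvd_sub (n - 1) (show 4 ∣ y + s - 0 by omega)] at fresh ⊢
  exact opening.answerable_last_column_zero hdc fresh

end Advancing

section Returning

variable (hj : 0 ≤ j) (hjd : j < d) (hdn : d < n) (even : j % 2 = 0)
  (opening : OpeningTurn V d e j)
include hj hjd hdn even opening

theorem OpeningTurn.answerable_right_of_returning :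
    Answerable (generators n) (Steered n) V (vertex n j 2) (vertex n (j + 1) 2) := by
  have odd := opening.odd
  have unit := opening.unit
  obtain hturn | hlt : j + 1 = d ∨ j + 2 < d := by omega
  · rw [hturn]
    refine ⟨mt (opening.column 2) (by omega), _, vertex_adj_vertical d 2 (s := -e) (by omega),
      vertex_ne_vertex (by omega) (by omega) (by omega), Or.inl ?_⟩
    rw [vertex_eq_of_dvd_sub d (show 4 ∣ 2 + -e - e by omega)]
    exact opening.turn
  · refine ⟨mt (opening.before (j + 1) 2 (by omega) (by omega)) (by omega), _,
      vertex_adj_right _ _, vertex_ne_vertex (by omega) (by omega) (by omega), Or.inr ?_⟩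
    have opening := (opening.insert_return hdn (by omega) (by omega)).insert_return
      hdn (by omega) (by omega)
    simpa only [add_sub_cancel_right] using
      Steered.returning (by omega) (by omega) hdn (by omega) opening

omit even in
theorem OpeningTurn.answerable_vertical_of_returning {s : ℤ} (hs : s = 1 ∨ s = -1) :
    Answerable (generators n) (Steered n) V (vertex n j 2) (vertex n j (2 + s)) := by
  refine ⟨mt (opening.before j _ hj hjd) (by omega), _, vertex_adj_vertical j (2 + s) hs,
    vertex_ne_vertex (by omega) (by omega) (by omega), Or.inl ?_⟩
  rw [vertex_eq_of_dvd_sub j (show 4 ∣ 2 + s + s - 0 by omega)]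
  exact opening.row j hj hjd.le

end Returning

theorem Steered.answerable (hn : 1 < n) (n_odd : Odd n) {p g : QuaternionGroup n}
    (h : Steered n V p g) {w : QuaternionGroup n} (hw : (mulCayley (generators n)).Adj g w)
    (hne : w ≠ p) : Answerable (generators n) (Steered n) V g w := by
  cases h with
  | straight pos lt odd row =>
    exact answerable_of_adj_left (row.answerable_right pos lt odd n_odd)
      (fun _ => row.answerable_vertical pos lt odd) hw hne
  | advancing turned lt parity opening frontier =>
    exact answerable_of_adj_left
      (opening.answerable_right turned lt parity frontier n_odd)
      (fun _ => opening.answerable_vertical turned lt parity frontier n_odd) hw hne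
  | returning nonneg lt turn_lt even opening =>
    exact answerable_of_adj_left
      (opening.answerable_right_of_returning nonneg lt turn_lt even)
      (fun _ => opening.answerable_vertical_of_returning nonneg lt turn_lt) hw hne
  | corner corner => exact corner.answerable hn hw hne

end Dicyclic

end RelatorGames

open RelatorGames in
/-- For odd `n ≥ 3`, Player 1 has a winning strategy for
`REL(Dic_n, {a,x})`. -/
theorem rel_dicyclic_odd_first_wins (n : ℕ) (hn : 3 ≤ n) (hodd : Odd n) :
    FirstWinsREL
      ({QuaternionGroup.a 1, QuaternionGroup.xa 0} : Set (QuaternionGroup n)) := by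
  have : NeZero n := ⟨by omega⟩
  have opening_move := vertex_adj_right (n := n) 0 0
  have row := (StraightRow.one (n := n)).insert le_rfl (by omega)
  have steered := Steered.straight (by omega) (by omega) (by decide) row
  rw [add_sub_cancel_right, vertex_zero_zero] at steered
  rw [vertex_zero_zero] at opening_move
  exact firstWinsREL_of_answerable one_notMem_generators opening_move steered
    fun _ _ _ h _ => h.answerable (by omega) hodd
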